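/- Let z₀, γ₀ ∈ 𝔻 and γ₁ ∈ 𝔻. Then the set {f''(z₀) : f ∈ ℋ, f(z₀) = γ₀, H¹f(z₀) = γ₁} is exactly the closed disk centered at c₂ with radius ρ₂. -/

import Mathlib

open Complex Metric

/-- `ℋ`: analytic self-maps of the open unit disk. -/
def Hclass (f : ℂ → ℂ) : Prop :=
  DifferentiableOn ℂ f (ball (0 : ℂ) 1) ∧ Set.MapsTo f (ball (0 : ℂ) 1) (ball (0 : ℂ) 1)

/-- The (first-order) hyperbolic derivative `H¹f(z) = (1-|z|²)f'(z)/(1-|f(z)|²)`. -/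
noncomputable def H1 (f : ℂ → ℂ) (z : ℂ) : ℂ :=
  ((1 - ‖z‖ ^ 2 : ℝ) : ℂ) * deriv f z / ((1 - ‖f z‖ ^ 2 : ℝ) : ℂ)

/-!
The Schur algorithm at `z₀`. Write `φ_a(z) = (z + a) / (1 + conj a * z)`. By the Schwarz lemma,
every self-map `f` of the disk is `φ_{f z₀} ∘ (φ_{-z₀} · q)` with `q` holomorphic and `|q| ≤ 1`;
conversely every such `q` gives a self-map. Differentiating at `z₀`, the value of `q` is `H¹f(z₀)`,
and `f''(z₀) = c₂ + ρ₂ * H¹q(z₀)`. The first identity, applied to `q` in place of `f`, says that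
`H¹q(z₀)` ranges over the closed unit disk.
-/

section

open Set
open scoped ComplexConjugate Topology

local notation "𝔻" => ball (0 : ℂ) 1

theorem mapsTo_ball_of_mapsTo_closedBall {E F : Type*} [NormedAddCommGroup E] [NormedSpace ℂ E]
    [NormedAddCommGroup F] [NormedSpace ℂ F] {f : E → F} {U : Set E} {c : E} {r : ℝ}
    (hU : IsPreconnected U) (hUo : IsOpen U) (hf : DifferentiableOn ℂ f U)
    (hmaps : MapsTo f U (closedBall 0 r)) (hcU : c ∈ U) (hc : f c ∈ ball 0 r) :
    MapsTo f U (ball 0 r) := by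
  intro z hz
  have hle : ∀ y ∈ U, ‖f y‖ ≤ r := fun y hy => mem_closedBall_zero_iff.mp (hmaps hy)
  refine mem_ball_zero_iff.mpr ((hle z hz).lt_of_ne fun hzr => ?_)
  have hmax : IsMaxOn (norm ∘ f) U z := fun y hy => (hle y hy).trans_eq hzr.symm
  have hcz : ‖f c‖ = ‖f z‖ := norm_eqOn_of_isPreconnected_of_isMaxOn hU hUo hf hz hmax hcU
  exact (mem_ball_zero_iff.mp hc).ne (hcz.trans hzr)

theorem hasDerivAt_one_add_mul {𝕜 : Type*} [NontriviallyNormedField 𝕜] (c z : 𝕜) :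
    HasDerivAt (fun w => 1 + c * w) c z := by
  simpa using ((hasDerivAt_id z).const_mul c).const_add 1

theorem one_sub_norm_sq_pos {a : ℂ} (ha : a ∈ 𝔻) : 0 < 1 - ‖a‖ ^ 2 := by
  have := mem_ball_zero_iff.mp ha
  nlinarith [norm_nonneg a]

theorem ofReal_one_sub_norm_sq (a : ℂ) : ((1 - ‖a‖ ^ 2 : ℝ) : ℂ) = 1 - conj a * a := by
  rw [conj_mul']
  push_cast
  rfl

theorem ofReal_one_sub_norm_sq_ne_zero {a : ℂ} (ha : a ∈ 𝔻) : ((1 - ‖a‖ ^ 2 : ℝ) : ℂ) ≠ 0 :=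
  ofReal_ne_zero.mpr (one_sub_norm_sq_pos ha).ne'

theorem one_add_conj_mul_ne_zero {a z : ℂ} (ha : a ∈ 𝔻) (hz : z ∈ 𝔻) : 1 + conj a * z ≠ 0 := by
  intro h
  have hnorm : ‖a‖ * ‖z‖ = 1 := by
    simpa using congrArg norm (eq_neg_of_add_eq_zero_right h)
  rw [mem_ball_zero_iff] at ha hz
  exact (mul_lt_one_of_nonneg_of_lt_one_left (norm_nonneg a) ha hz.le).ne hnorm

theorem one_add_conj_neg_mul_self (a : ℂ) : 1 + conj (-a) * a = ((1 - ‖a‖ ^ 2 : ℝ) : ℂ) := by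
  rw [ofReal_one_sub_norm_sq, map_neg]
  ring

theorem norm_one_add_conj_mul_sq_sub (a z : ℂ) :
    ‖1 + conj a * z‖ ^ 2 - ‖z + a‖ ^ 2 = (1 - ‖a‖ ^ 2) * (1 - ‖z‖ ^ 2) := by
  simp only [← normSq_eq_norm_sq, normSq_apply, add_re, add_im, mul_re, mul_im, conj_re, conj_im,
    one_re, one_im]
  ring

theorem neg_mem_unitDisk {a : ℂ} (ha : a ∈ 𝔻) : -a ∈ 𝔻 := by
  simpa using ha

theorem H1_congr {f g : ℂ → ℂ} {z : ℂ} (h : f =ᶠ[𝓝 z] g) : H1 f z = H1 g z := by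
  rw [H1, H1, h.deriv_eq, h.eq_of_nhds]

/-- The automorphism `φ_a` of the unit disk that sends `0` to `a`. Its inverse is `φ_{-a}`. -/
noncomputable def diskAut (a z : ℂ) : ℂ := (z + a) / (1 + conj a * z)

@[simp] theorem diskAut_zero (a : ℂ) : diskAut a 0 = a := by simp [diskAut]

@[simp] theorem diskAut_neg_self (a : ℂ) : diskAut (-a) a = 0 := by simp [diskAut]

theorem diskAut_mem_unitDisk {a z : ℂ} (ha : a ∈ 𝔻) (hz : z ∈ 𝔻) : diskAut a z ∈ 𝔻 := by
  rw [mem_ball_zero_iff, diskAut, norm_div,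
    div_lt_one (norm_pos_iff.mpr (one_add_conj_mul_ne_zero ha hz))]
  refine lt_of_pow_lt_pow_left₀ 2 (norm_nonneg _) (sub_pos.mp ?_)
  rw [norm_one_add_conj_mul_sq_sub]
  exact mul_pos (one_sub_norm_sq_pos ha) (one_sub_norm_sq_pos hz)

theorem diskAut_diskAut_neg {a z : ℂ} (ha : a ∈ 𝔻) (hz : z ∈ 𝔻) :
    diskAut a (diskAut (-a) z) = z := by
  have hcancel : diskAut (-a) z * (1 + conj (-a) * z) = z + -a :=
    div_mul_cancel₀ _ (one_add_conj_mul_ne_zero (neg_mem_unitDisk ha) hz)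
  have hdenom := one_add_conj_mul_ne_zero ha (diskAut_mem_unitDisk (neg_mem_unitDisk ha) hz)
  rw [map_neg] at hcancel
  rw [diskAut, div_eq_iff hdenom]
  linear_combination hcancel

theorem hasDerivAt_diskAut {a z : ℂ} (h : 1 + conj a * z ≠ 0) :
    HasDerivAt (diskAut a) (((1 - ‖a‖ ^ 2 : ℝ) : ℂ) / (1 + conj a * z) ^ 2) z := by
  have hnum : HasDerivAt (fun w => w + a) 1 z := (hasDerivAt_id z).add_const a
  refine (hnum.fun_div (hasDerivAt_one_add_mul (conj a) z) h).congr_deriv ?_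
  rw [ofReal_one_sub_norm_sq]
  ring

theorem analyticAt_diskAut {a z : ℂ} (h : 1 + conj a * z ≠ 0) : AnalyticAt ℂ (diskAut a) z :=
  (analyticAt_id.add analyticAt_const).fun_div
    (analyticAt_const.add (analyticAt_const.mul analyticAt_id)) h

theorem iteratedDeriv_two_diskAut {a z : ℂ} (h : 1 + conj a * z ≠ 0) :
    iteratedDeriv 2 (diskAut a) z =
      -2 * conj a * ((1 - ‖a‖ ^ 2 : ℝ) : ℂ) / (1 + conj a * z) ^ 3 := by
  have hderiv : deriv (diskAut a) =ᶠ[𝓝 z]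
      fun w => ((1 - ‖a‖ ^ 2 : ℝ) : ℂ) / (1 + conj a * w) ^ 2 := by
    have hcont : ContinuousAt (fun w => 1 + conj a * w) z := by fun_prop
    filter_upwards [hcont.eventually_ne h] with w hw using (hasDerivAt_diskAut hw).deriv
  have hquot := (hasDerivAt_const z ((1 - ‖a‖ ^ 2 : ℝ) : ℂ)).fun_div
    ((hasDerivAt_one_add_mul (conj a) z).fun_pow 2) (pow_ne_zero 2 h)
  rw [iteratedDeriv_succ, iteratedDeriv_one, hderiv.deriv_eq, hquot.deriv]
  field_simp
  ring

theorem hasDerivAt_diskAut_zero (a : ℂ) :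
    HasDerivAt (diskAut a) ((1 - ‖a‖ ^ 2 : ℝ) : ℂ) 0 := by
  simpa using hasDerivAt_diskAut (a := a) (z := 0) (by simp)

theorem iteratedDeriv_two_diskAut_zero (a : ℂ) :
    iteratedDeriv 2 (diskAut a) 0 = -2 * conj a * ((1 - ‖a‖ ^ 2 : ℝ) : ℂ) := by
  simpa using iteratedDeriv_two_diskAut (a := a) (z := 0) (by simp)

theorem hasDerivAt_diskAut_neg_self {a : ℂ} (ha : a ∈ 𝔻) :
    HasDerivAt (diskAut (-a)) ((1 - ‖a‖ ^ 2 : ℝ) : ℂ)⁻¹ a := by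
  have hne := ofReal_one_sub_norm_sq_ne_zero ha
  have h := hasDerivAt_diskAut (one_add_conj_neg_mul_self a ▸ hne)
  rw [one_add_conj_neg_mul_self, norm_neg] at h
  exact h.congr_deriv (by field_simp)

theorem iteratedDeriv_two_diskAut_neg_self {a : ℂ} (ha : a ∈ 𝔻) :
    iteratedDeriv 2 (diskAut (-a)) a = 2 * conj a / ((1 - ‖a‖ ^ 2 : ℝ) : ℂ) ^ 2 := by
  have hne := ofReal_one_sub_norm_sq_ne_zero ha
  rw [iteratedDeriv_two_diskAut (one_add_conj_neg_mul_self a ▸ hne), one_add_conj_neg_mul_self,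
    norm_neg, map_neg]
  field_simp

/-- The Schur class: holomorphic functions on the unit disk bounded by `1`. Unlike `Hclass` it
contains the unimodular constants. -/
def SchurClass (q : ℂ → ℂ) : Prop :=
  DifferentiableOn ℂ q 𝔻 ∧ MapsTo q 𝔻 (closedBall 0 1)

theorem schurClass_const {δ : ℂ} (hδ : δ ∈ closedBall (0 : ℂ) 1) : SchurClass fun _ => δ :=
  ⟨differentiableOn_const δ, fun _ _ => hδ⟩

theorem SchurClass.hclass_of_mem_ball {q : ℂ → ℂ} (hq : SchurClass q) {z : ℂ} (hz : z ∈ 𝔻)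
    (hqz : q z ∈ 𝔻) : Hclass q :=
  ⟨hq.1, mapsTo_ball_of_mapsTo_closedBall (convex_ball 0 1).isPreconnected isOpen_ball hq.1 hq.2
    hz hqz⟩

theorem SchurClass.comp {q f : ℂ → ℂ} (hq : SchurClass q) (hf : Hclass f) : SchurClass (q ∘ f) :=
  ⟨hq.1.comp hf.1 hf.2, hq.2.comp hf.2⟩

theorem SchurClass.analyticAt {q : ℂ → ℂ} (hq : SchurClass q) {z : ℂ} (hz : z ∈ 𝔻) :
    AnalyticAt ℂ q z :=
  hq.1.analyticAt (isOpen_ball.mem_nhds hz)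

theorem Hclass.schurClass {f : ℂ → ℂ} (hf : Hclass f) : SchurClass f :=
  ⟨hf.1, hf.2.mono_right ball_subset_closedBall⟩

theorem Hclass.comp {g f : ℂ → ℂ} (hg : Hclass g) (hf : Hclass f) : Hclass (g ∘ f) :=
  ⟨hg.1.comp hf.1 hf.2, hg.2.comp hf.2⟩

theorem Hclass.mul_schurClass {f q : ℂ → ℂ} (hf : Hclass f) (hq : SchurClass q) :
    Hclass fun z => f z * q z := by
  refine ⟨hf.1.mul hq.1, fun z hz => ?_⟩
  have hfz := mem_ball_zero_iff.mp (hf.2 hz)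
  have hqz := mem_closedBall_zero_iff.mp (hq.2 hz)
  rw [mem_ball_zero_iff, norm_mul]
  exact mul_lt_one_of_nonneg_of_lt_one_left (norm_nonneg _) hfz hqz

theorem hclass_diskAut {a : ℂ} (ha : a ∈ 𝔻) : Hclass (diskAut a) :=
  ⟨fun _ hz =>
    (hasDerivAt_diskAut (one_add_conj_mul_ne_zero ha hz)).differentiableAt.differentiableWithinAt,
    fun _ hz => diskAut_mem_unitDisk ha hz⟩

theorem Hclass.schurClass_dslope_zero {f : ℂ → ℂ} (hf : Hclass f) (hf0 : f 0 = 0) :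
    SchurClass (dslope f 0) := by
  refine ⟨(differentiableOn_dslope (ball_mem_nhds 0 one_pos)).mpr hf.1, fun z hz => ?_⟩
  have hmaps : MapsTo f 𝔻 (closedBall (f 0) 1) := by
    rw [hf0]
    exact hf.schurClass.2
  simpa using norm_dslope_le_div_of_mapsTo_ball hf.1 hmaps hz

/-- The inverse Schur step: the function `f = φ_γ ∘ (φ_{-z₀} · q)`, with `f z₀ = γ`, whose Schur
quotient `φ_{-γ}(f z) / φ_{-z₀}(z)` at `z₀` is `q`. -/
noncomputable def schurLift (z₀ γ : ℂ) (q : ℂ → ℂ) : ℂ → ℂ :=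
  diskAut γ ∘ fun z => diskAut (-z₀) z * q z

variable {z₀ γ : ℂ} {q : ℂ → ℂ}

@[simp] theorem schurLift_self (z₀ γ : ℂ) (q : ℂ → ℂ) : schurLift z₀ γ q z₀ = γ := by
  simp [schurLift]

theorem SchurClass.hclass_schurLift (hq : SchurClass q) (hz₀ : z₀ ∈ 𝔻) (hγ : γ ∈ 𝔻) :
    Hclass (schurLift z₀ γ q) :=
  (hclass_diskAut hγ).comp ((hclass_diskAut (neg_mem_unitDisk hz₀)).mul_schurClass hq)

theorem Hclass.exists_schurClass_eqOn_schurLift {f : ℂ → ℂ} (hf : Hclass f) (hz₀ : z₀ ∈ 𝔻) :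
    ∃ q, SchurClass q ∧ EqOn f (schurLift z₀ (f z₀) q) 𝔻 := by
  have hneg := hclass_diskAut (neg_mem_unitDisk hz₀)
  set F : ℂ → ℂ := diskAut (-f z₀) ∘ f ∘ diskAut z₀ with hF
  have hF0 : F 0 = 0 := by simp [hF]
  have hFclass : Hclass F :=
    (hclass_diskAut (neg_mem_unitDisk (hf.2 hz₀))).comp (hf.comp (hclass_diskAut hz₀))
  refine ⟨dslope F 0 ∘ diskAut (-z₀), (hFclass.schurClass_dslope_zero hF0).comp hneg,
    fun z hz => ?_⟩
  have hfactor : diskAut (-z₀) z * dslope F 0 (diskAut (-z₀) z) = diskAut (-f z₀) (f z) := by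
    simpa [hF, diskAut_diskAut_neg hz₀ hz] using sub_smul_dslope F 0 (diskAut (-z₀) z)
  simp only [schurLift, Function.comp_apply, hfactor, diskAut_diskAut_neg (hf.2 hz₀) (hf.2 hz)]

theorem hasDerivAt_diskAut_neg_mul (hz₀ : z₀ ∈ 𝔻) (hq : DifferentiableAt ℂ q z₀) :
    HasDerivAt (fun z => diskAut (-z₀) z * q z) (q z₀ / ((1 - ‖z₀‖ ^ 2 : ℝ) : ℂ)) z₀ := by
  refine ((hasDerivAt_diskAut_neg_self hz₀).fun_mul hq.hasDerivAt).congr_deriv ?_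
  rw [diskAut_neg_self]
  ring

theorem iteratedDeriv_two_diskAut_neg_mul (hz₀ : z₀ ∈ 𝔻) (hq : ContDiffAt ℂ 2 q z₀) :
    iteratedDeriv 2 (fun z => diskAut (-z₀) z * q z) z₀ =
      2 * conj z₀ / ((1 - ‖z₀‖ ^ 2 : ℝ) : ℂ) ^ 2 * q z₀ +
        2 / ((1 - ‖z₀‖ ^ 2 : ℝ) : ℂ) * deriv q z₀ := by
  have hφ : ContDiffAt ℂ 2 (diskAut (-z₀)) z₀ :=
    (analyticAt_diskAut (one_add_conj_mul_ne_zero (neg_mem_unitDisk hz₀) hz₀)).contDiffAt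
  rw [iteratedDeriv_fun_mul hφ hq]
  simp only [Finset.sum_range_succ, Finset.sum_range_zero, iteratedDeriv_zero, iteratedDeriv_one,
    diskAut_neg_self, (hasDerivAt_diskAut_neg_self hz₀).deriv,
    iteratedDeriv_two_diskAut_neg_self hz₀, Nat.choose_one_right, Nat.choose_self, Nat.sub_self,
    Nat.add_one_sub_one, Nat.cast_ofNat, Nat.cast_one]
  ring

theorem H1_schurLift (hz₀ : z₀ ∈ 𝔻) (hγ : γ ∈ 𝔻) (hq : DifferentiableAt ℂ q z₀) :
    H1 (schurLift z₀ γ q) z₀ = q z₀ := by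
  have hz₀ne := ofReal_one_sub_norm_sq_ne_zero hz₀
  have hγne := ofReal_one_sub_norm_sq_ne_zero hγ
  have hderiv : deriv (schurLift z₀ γ q) z₀ =
      ((1 - ‖γ‖ ^ 2 : ℝ) : ℂ) * (q z₀ / ((1 - ‖z₀‖ ^ 2 : ℝ) : ℂ)) :=
    (HasDerivAt.comp_of_eq z₀ (hasDerivAt_diskAut_zero γ) (hasDerivAt_diskAut_neg_mul hz₀ hq)
      (by simp)).deriv
  rw [H1, schurLift_self, hderiv]
  field_simp

theorem iteratedDeriv_two_schurLift (hz₀ : z₀ ∈ 𝔻) (hq : ContDiffAt ℂ 2 q z₀) (hqz₀ : q z₀ ∈ 𝔻) :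
    iteratedDeriv 2 (schurLift z₀ γ q) z₀ =
      2 * ((1 - ‖γ‖ ^ 2 : ℝ) : ℂ) / ((1 - ‖z₀‖ ^ 2 : ℝ) : ℂ) ^ 2 *
          (conj z₀ - conj γ * q z₀) * q z₀ +
        (2 * (1 - ‖γ‖ ^ 2) * (1 - ‖q z₀‖ ^ 2) / (1 - ‖z₀‖ ^ 2) ^ 2 : ℝ) • H1 q z₀ := by
  have hz₀ne := ofReal_one_sub_norm_sq_ne_zero hz₀
  have hqz₀ne := ofReal_one_sub_norm_sq_ne_zero hqz₀
  set h : ℂ → ℂ := fun z => diskAut (-z₀) z * q z with hh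
  have hh0 : h z₀ = 0 := by simp [hh]
  have hφ := analyticAt_diskAut (one_add_conj_mul_ne_zero (neg_mem_unitDisk hz₀) hz₀)
  have hφγ : ContDiffAt ℂ 2 (diskAut γ) (h z₀) := (analyticAt_diskAut (by simp [hh0])).contDiffAt
  have hcomp := iteratedDeriv_comp_two hφγ (hφ.contDiffAt.mul hq : ContDiffAt ℂ 2 h z₀)
  rw [hh0, iteratedDeriv_two_diskAut_zero, (hasDerivAt_diskAut_zero γ).deriv,
    (hasDerivAt_diskAut_neg_mul hz₀ (hq.differentiableAt two_ne_zero)).deriv,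
    iteratedDeriv_two_diskAut_neg_mul hz₀ hq] at hcomp
  rw [schurLift, hcomp, H1, real_smul]
  push_cast at hz₀ne hqz₀ne ⊢
  field_simp
  ring

theorem Hclass.exists_schurClass_eventuallyEq_schurLift {f : ℂ → ℂ} (hf : Hclass f)
    (hz₀ : z₀ ∈ 𝔻) :
    ∃ q, SchurClass q ∧ q z₀ = H1 f z₀ ∧ f =ᶠ[𝓝 z₀] schurLift z₀ (f z₀) q := by
  obtain ⟨q, hq, hfq⟩ := hf.exists_schurClass_eqOn_schurLift hz₀
  have hnear := hfq.eventuallyEq_of_mem (isOpen_ball.mem_nhds hz₀)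
  refine ⟨q, hq, ?_, hnear⟩
  rw [H1_congr hnear, H1_schurLift hz₀ (hf.2 hz₀) (hq.analyticAt hz₀).differentiableAt]

theorem Hclass.norm_H1_le_one {f : ℂ → ℂ} (hf : Hclass f) (hz₀ : z₀ ∈ 𝔻) :
    ‖H1 f z₀‖ ≤ 1 := by
  obtain ⟨q, hq, hqz₀, -⟩ := hf.exists_schurClass_eventuallyEq_schurLift hz₀
  exact hqz₀ ▸ mem_closedBall_zero_iff.mp (hq.2 hz₀)

end

/-- Schwarz-Pick Lemma of second derivative: the variability region of `f''(z₀)` over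
all `f ∈ ℋ` with `f(z₀) = γ₀` and `H¹f(z₀) = γ₁` is the closed disk with center
`c₂ = 2(1-|γ₀|²)(conj z₀ - conj γ₀ · γ₁)γ₁/(1-|z₀|²)²` and radius
`ρ₂ = 2(1-|γ₀|²)(1-|γ₁|²)/(1-|z₀|²)²`. -/
theorem schwarz_pick_second_variability (z₀ γ₀ γ₁ : ℂ)
    (hz₀ : z₀ ∈ ball (0 : ℂ) 1) (hγ₀ : γ₀ ∈ ball (0 : ℂ) 1)
    (hγ₁ : γ₁ ∈ ball (0 : ℂ) 1) :
    {w : ℂ | ∃ f : ℂ → ℂ, Hclass f ∧ f z₀ = γ₀ ∧ H1 f z₀ = γ₁ ∧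
        iteratedDeriv 2 f z₀ = w} =
      closedBall
        (2 * ((1 - ‖γ₀‖ ^ 2 : ℝ) : ℂ) / ((1 - ‖z₀‖ ^ 2 : ℝ) : ℂ) ^ 2 *
          ((starRingEnd ℂ) z₀ - (starRingEnd ℂ) γ₀ * γ₁) * γ₁)
        (2 * (1 - ‖γ₀‖ ^ 2) * (1 - ‖γ₁‖ ^ 2) / (1 - ‖z₀‖ ^ 2) ^ 2) := by
  have hρ : 0 ≤ 2 * (1 - ‖γ₀‖ ^ 2) * (1 - ‖γ₁‖ ^ 2) / (1 - ‖z₀‖ ^ 2) ^ 2 := by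
    have := one_sub_norm_sq_pos hγ₀
    have := one_sub_norm_sq_pos hγ₁
    positivity
  rw [← affinity_unitClosedBall hρ]
  refine Set.Subset.antisymm ?_ ?_
  · rintro _ ⟨f, hf, rfl, rfl, rfl⟩
    obtain ⟨q, hq, hqz₀, hfq⟩ := hf.exists_schurClass_eventuallyEq_schurLift hz₀
    rw [← hqz₀] at hγ₁ ⊢
    have hqH := hq.hclass_of_mem_ball hz₀ hγ₁
    rw [hfq.iteratedDeriv_eq, iteratedDeriv_two_schurLift hz₀ (hq.analyticAt hz₀).contDiffAt hγ₁]
    exact Set.vadd_mem_vadd_set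
      (Set.smul_mem_smul_set (mem_closedBall_zero_iff.mpr (hqH.norm_H1_le_one hz₀)))
  · rintro _ ⟨_, ⟨δ, hδ, rfl⟩, rfl⟩
    have hδS := schurClass_const hδ
    have hq := (hδS.hclass_schurLift hz₀ hγ₁).schurClass
    have hqan := hq.analyticAt hz₀
    refine ⟨schurLift z₀ γ₀ (schurLift z₀ γ₁ fun _ => δ), hq.hclass_schurLift hz₀ hγ₀,
      schurLift_self .., ?_, ?_⟩
    · rw [H1_schurLift hz₀ hγ₀ hqan.differentiableAt, schurLift_self]
    · rw [iteratedDeriv_two_schurLift hz₀ hqan.contDiffAt (by simpa using hγ₁), schurLift_self,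
        H1_schurLift hz₀ hγ₁ (differentiableAt_const δ)]
      rfl
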